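/- Let k be a field of characteristic 0 and V a finite-dimensional k-vector space equipped with a nondegenerate bilinear form Φ which is either symmetric with dim V ≥ 3, or skew-symmetric with dim V = 2m ≥ 2. Let o(Φ) = {M ∈ End(V) : Φ(M(u),v) + Φ(u,M(v)) = 0 for all u,v ∈ V}. Then o(Φ) + o(Φ)² = End(V) (so the compatible pair (o(Φ), End(V)) is of type 2), and for every associative k-algebra F one has (o(Φ), End(V))(F) = F ⊗ o(Φ) + [F,F] ⊗ 1 + (F·[F,F] + [F,F]) ⊗ sl(V), where sl(V) is the subspace of traceless endomorphisms of V. -/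

import Mathlib

open Submodule TensorProduct

variable (K : Type*) [Field K]

/-- The span of all products `a * b`, `a ∈ S`, `b ∈ T` (the subspace `S·T`). -/
def pSpan {R : Type*} [NonUnitalRing R] [Module K R] (S T : Submodule K R) : Submodule K R :=
  Submodule.span K {x | ∃ a ∈ S, ∃ b ∈ T, x = a * b}

/-- The span of all commutators `a * b - b * a`, `a ∈ S`, `b ∈ T` (the subspace `[S, T]`). -/
def bSpan {R : Type*} [NonUnitalRing R] [Module K R] (S T : Submodule K R) : Submodule K R :=
  Submodule.span K {x | ∃ a ∈ S, ∃ b ∈ T, x = a * b - b * a}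

/-- The `k`-th commutator space `S^(k)`: `S^(0) = S`, `S^(k) = [S, S^(k-1)]`.
For `S = ⊤` this is the commutator space `F^(k)` of the algebra. -/
def cSp {R : Type*} [NonUnitalRing R] [Module K R] (S : Submodule K R) : ℕ → Submodule K R
  | 0 => S
  | (k+1) => bSpan K S (cSp S k)

/-- `IklS K S ℓ k` is `I_k^ℓ(R, S)`: the sum of `S^(λ₁) ⋯ S^(λ_ℓ)` over
`λ₁ + ⋯ + λ_ℓ = k`, defined via the recursion `I_k^1 = S^(k)`,
`I_k^ℓ = Σ_{0 ≤ i ≤ k} S^(i) · I_{k-i}^{ℓ-1}`.  The first argument is the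
superscript `ℓ`, the second the subscript `k`; the (unused) value at `ℓ = 0` is `⊥`.
For `S = ⊤` this is `I_k^ℓ(F)`. -/
def IklS {R : Type*} [NonUnitalRing R] [Module K R] (S : Submodule K R) :
    ℕ → ℕ → Submodule K R
  | 0, _ => ⊥
  | 1, k => cSp K S k
  | (ℓ+2), k => ∑ i ∈ Finset.range (k+1), pSpan K (cSp K S i) (IklS S (ℓ+1) (k-i))

/-- `I_k^{≤ℓ}(F) = Σ_{1 ≤ ℓ' ≤ ℓ} I_k^{ℓ'}(F)`. -/
def Ikle {R : Type*} [NonUnitalRing R] [Module K R] (ℓ k : ℕ) : Submodule K R :=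
  ∑ ℓ' ∈ Finset.Icc 1 ℓ, IklS K (⊤ : Submodule K R) ℓ' k

/-- `I_k(F) = Σ_{ℓ ≥ 1} I_k^ℓ(F)`. -/
def Ik (R : Type*) [NonUnitalRing R] [Module K R] (k : ℕ) : Submodule K R :=
  ⨆ ℓ : ℕ, IklS K (⊤ : Submodule K R) (ℓ + 1) k

/-- `g^n`: the span of all products of `n` elements of `g` (set to `⊥` for `n = 0`). -/
def gPow {R : Type*} [NonUnitalRing R] [Module K R] (g : Submodule K R) : ℕ → Submodule K R
  | 0 => ⊥
  | 1 => g
  | (n+2) => pSpan K g (gPow g (n+1))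

/-- The Lie subalgebra (under the commutator bracket) generated by a subspace `S`:
the smallest subspace containing `S` and closed under `(x, y) ↦ x * y - y * x`. -/
def lieGen {R : Type*} [NonUnitalRing R] [Module K R] (S : Submodule K R) : Submodule K R :=
  sInf {T | S ≤ T ∧ ∀ x ∈ T, ∀ y ∈ T, x * y - y * x ∈ T}

/-- The subspace `S ⊗ T` of `F ⊗[K] A`: the span of all pure tensors `f ⊗ a`
with `f ∈ S`, `a ∈ T`. -/
def tSpan {F A : Type*} [AddCommGroup F] [Module K F] [AddCommGroup A] [Module K A]
    (S : Submodule K F) (T : Submodule K A) : Submodule K (F ⊗[K] A) :=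
  Submodule.span K {z | ∃ f ∈ S, ∃ a ∈ T, z = f ⊗ₜ[K] a}

/-- The current Lie algebra `(g, A)(F)`: the Lie subalgebra of `F ⊗ A` (with the
commutator bracket) generated by `F ⊗ g`. -/
def currentLie {F A : Type*} [NonUnitalRing F] [Module K F] [SMulCommClass K F F]
    [IsScalarTower K F F] [Ring A] [Algebra K A] (g : Submodule K A) :
    Submodule K (F ⊗[K] A) :=
  lieGen K (tSpan K (⊤ : Submodule K F) g)

/-!
The identity `[f ⊗ a, f' ⊗ b] = [f, f'] ⊗ ab + f'f ⊗ [a, b]` determines `(g, A)(F)` for every pair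
with `g + g² = A`. Brackets of `F ⊗ g` with itself produce `[F, F] ⊗ g²`, hence `[F, F] ⊗ A`;
bracketing the latter with `F ⊗ g` produces `F[F, F] ⊗ [g, A]`, and `[g, A] = [A, A]` because
`[ab, x] = [a, bx] + [b, xa]`. Conversely, the subspace so obtained is closed under brackets.

For `A = End V` one has `[A, A] = sl(V)` and `A = K · 1 + sl(V)`, so it remains to see that
`o(Φ)² = End V`. If `Φ(v, u) = ε Φ(u, v)`, then `o(Φ)` contains the operators
`u ∧ v = E(u, v) - ε E(v, u)`, where `E(u, v) x = Φ(v, x) u`. For dual bases `e`, `d` the products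
`(eᵢ ∧ eₖ)(dₖ ∧ dⱼ)` yield every `E(eᵢ, dⱼ)`: take `k ∉ {i, j}` in the symmetric case and `k = j` in
the skew-symmetric case.
-/

section Spans

variable {K} {R F A : Type*} [NonUnitalRing R] [Module K R]
  [AddCommGroup F] [Module K F] [AddCommGroup A] [Module K A]

theorem mul_mem_pSpan {S T : Submodule K R} {a b : R} (ha : a ∈ S) (hb : b ∈ T) :
    a * b ∈ pSpan K S T :=
  subset_span ⟨a, ha, b, hb, rfl⟩

theorem commutator_mem_bSpan {S T : Submodule K R} {a b : R} (ha : a ∈ S) (hb : b ∈ T) :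
    a * b - b * a ∈ bSpan K S T :=
  subset_span ⟨a, ha, b, hb, rfl⟩

theorem tmul_mem_tSpan {S : Submodule K F} {T : Submodule K A} {f : F} {a : A}
    (hf : f ∈ S) (ha : a ∈ T) : f ⊗ₜ[K] a ∈ tSpan K S T :=
  subset_span ⟨f, hf, a, ha, rfl⟩

theorem tSpan_eq_map₂ (S : Submodule K F) (T : Submodule K A) :
    tSpan K S T = map₂ (TensorProduct.mk K F A) S T := by
  rw [map₂_eq_span_image2, tSpan]
  congr 1
  ext z
  simp only [Set.mem_image2, Set.mem_ofPred_eq, SetLike.mem_coe, TensorProduct.mk_apply, eq_comm]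

theorem tSpan_mono {S S' : Submodule K F} {T T' : Submodule K A} (hS : S ≤ S') (hT : T ≤ T') :
    tSpan K S T ≤ tSpan K S' T' := by
  simpa only [tSpan_eq_map₂] using map₂_le_map₂ hS hT

theorem tSpan_sup_left (S S' : Submodule K F) (T : Submodule K A) :
    tSpan K (S ⊔ S') T = tSpan K S T ⊔ tSpan K S' T := by
  simp only [tSpan_eq_map₂, map₂_sup_left]

theorem tSpan_sup_right (S : Submodule K F) (T T' : Submodule K A) :
    tSpan K S (T ⊔ T') = tSpan K S T ⊔ tSpan K S T' := by
  simp only [tSpan_eq_map₂, map₂_sup_right]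

theorem tSpan_span_span_le_iff {s : Set F} {t : Set A} {P : Submodule K (F ⊗[K] A)} :
    tSpan K (span K s) (span K t) ≤ P ↔ ∀ f ∈ s, ∀ a ∈ t, f ⊗ₜ[K] a ∈ P := by
  rw [tSpan_eq_map₂, map₂_span_span, span_le, Set.image2_subset_iff]
  rfl

variable [SMulCommClass K R R] [IsScalarTower K R R]

theorem bSpan_eq_map₂ (S T : Submodule K R) :
    bSpan K S T = map₂ (LinearMap.mul K R - (LinearMap.mul K R).flip) S T := by
  rw [map₂_eq_span_image2, bSpan]
  congr 1
  ext x
  simp only [Set.mem_image2, Set.mem_ofPred_eq, SetLike.mem_coe, LinearMap.sub_apply,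
    LinearMap.flip_apply, LinearMap.mul_apply', eq_comm]

theorem bSpan_mono {S S' T T' : Submodule K R} (hS : S ≤ S') (hT : T ≤ T') :
    bSpan K S T ≤ bSpan K S' T' := by
  simpa only [bSpan_eq_map₂] using map₂_le_map₂ hS hT

theorem bSpan_sup_left (S S' T : Submodule K R) :
    bSpan K (S ⊔ S') T = bSpan K S T ⊔ bSpan K S' T := by
  simp only [bSpan_eq_map₂, map₂_sup_left]

theorem bSpan_span_span_le_iff {s t : Set R} {P : Submodule K R} :
    bSpan K (span K s) (span K t) ≤ P ↔ ∀ a ∈ s, ∀ b ∈ t, a * b - b * a ∈ P := by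
  rw [bSpan_eq_map₂, map₂_span_span, span_le, Set.image2_subset_iff]
  rfl

theorem bSpan_top_right_eq_of_sup_sq_eq_top {g : Submodule K R} (hg : g ⊔ pSpan K g g = ⊤) :
    bSpan K g ⊤ = bSpan K (⊤ : Submodule K R) ⊤ := by
  refine le_antisymm (bSpan_mono le_top le_rfl) ?_
  rw [← hg, bSpan_sup_left, hg, sup_le_iff, pSpan, ← span_univ]
  refine ⟨le_rfl, bSpan_span_span_le_iff.2 ?_⟩
  rintro _ ⟨a, ha, b, hb, rfl⟩ x -
  have hsplit : a * b * x - x * (a * b) =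
      (a * (b * x) - b * x * a) + (b * (x * a) - x * a * b) := by
    noncomm_ring
  rw [hsplit, span_univ]
  exact add_mem (commutator_mem_bSpan ha mem_top) (commutator_mem_bSpan hb mem_top)

end Spans

section CommutatorIdeal

variable {F : Type*} [NonUnitalRing F] [Module K F]

variable (F) in
/-- The ideal `F·[F, F] + [F, F]` of `F` generated by all commutators. Since `F` need not have a
unit, `F·[F, F]` need not contain `[F, F]`. -/
def commutatorIdeal : Submodule K F :=
  pSpan K ⊤ (bSpan K ⊤ ⊤) ⊔ bSpan K ⊤ ⊤

variable {K}

theorem bSpan_top_le_commutatorIdeal : bSpan K (⊤ : Submodule K F) ⊤ ≤ commutatorIdeal K F :=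
  le_sup_right

theorem mul_mem_commutatorIdeal [SMulCommClass K F F] (f : F) {w : F}
    (hw : w ∈ commutatorIdeal K F) : f * w ∈ commutatorIdeal K F := by
  suffices h : commutatorIdeal K F ≤ (commutatorIdeal K F).comap (LinearMap.mulLeft K f) from h hw
  refine sup_le (span_le.2 ?_) fun c hc => mem_sup_left (mul_mem_pSpan mem_top hc)
  rintro _ ⟨a, -, c, hc, rfl⟩
  change f * (a * c) ∈ commutatorIdeal K F
  rw [← mul_assoc]
  exact mem_sup_left (mul_mem_pSpan mem_top hc)

end CommutatorIdeal

section CurrentLie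

variable {F A : Type*} [NonUnitalRing F] [Module K F] [Ring A] [Algebra K A]

variable (F) in
/-- The subspace `F ⊗ g + [F, F] ⊗ A + (F·[F, F] + [F, F]) ⊗ [A, A]` of `F ⊗ A`, which is
`(g, A)(F)` when `[g, g] ⊆ g` and `g + g² = A`. -/
def typeTwoCurrent (g : Submodule K A) : Submodule K (F ⊗[K] A) :=
  tSpan K ⊤ g ⊔ tSpan K (bSpan K ⊤ ⊤) ⊤ ⊔ tSpan K (commutatorIdeal K F) (bSpan K ⊤ ⊤)

variable {K}

theorem add_tmul_mem_typeTwoCurrent {g : Submodule K A} {c f : F} {x y : A}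
    (hc : c ∈ bSpan K (⊤ : Submodule K F) ⊤)
    (hfy : y ∈ g ∨ f ∈ commutatorIdeal K F ∧ y ∈ bSpan K (⊤ : Submodule K A) ⊤) :
    c ⊗ₜ[K] x + f ⊗ₜ[K] y ∈ typeTwoCurrent K F g := by
  refine add_mem (mem_sup_left (mem_sup_right (tmul_mem_tSpan hc mem_top))) ?_
  rcases hfy with hy | ⟨hf, hy⟩
  · exact mem_sup_left (mem_sup_left (tmul_mem_tSpan mem_top hy))
  · exact mem_sup_right (tmul_mem_tSpan hf hy)

theorem typeTwoCurrent_eq_of_span_one_sup_eq_top (g : Submodule K A)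
    (htop : span K {1} ⊔ bSpan K ⊤ ⊤ = (⊤ : Submodule K A)) :
    typeTwoCurrent K F g = tSpan K ⊤ g ⊔ tSpan K (bSpan K ⊤ ⊤) (span K {1}) ⊔
      tSpan K (commutatorIdeal K F) (bSpan K ⊤ ⊤) := by
  have habsorb : tSpan K (bSpan K (⊤ : Submodule K F) ⊤) (bSpan K (⊤ : Submodule K A) ⊤) ≤
      tSpan K (commutatorIdeal K F) (bSpan K ⊤ ⊤) :=
    tSpan_mono bSpan_top_le_commutatorIdeal le_rfl
  rw [typeTwoCurrent, ← htop, tSpan_sup_right, htop, ← sup_assoc, sup_assoc _ (tSpan K _ _),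
    sup_eq_right.2 habsorb]

variable [SMulCommClass K F F] [IsScalarTower K F F]

theorem tmul_commutator (f f' : F) (a b : A) :
    f ⊗ₜ[K] a * f' ⊗ₜ[K] b - f' ⊗ₜ[K] b * f ⊗ₜ[K] a =
      (f * f' - f' * f) ⊗ₜ[K] (a * b) + (f' * f) ⊗ₜ[K] (a * b - b * a) := by
  simp only [Algebra.TensorProduct.tmul_mul_tmul, sub_tmul, tmul_sub]
  abel

theorem tmul_commutator' (f f' : F) (a b : A) :
    f ⊗ₜ[K] a * f' ⊗ₜ[K] b - f' ⊗ₜ[K] b * f ⊗ₜ[K] a =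
      (f * f' - f' * f) ⊗ₜ[K] (b * a) + (f * f') ⊗ₜ[K] (a * b - b * a) := by
  simp only [Algebra.TensorProduct.tmul_mul_tmul, sub_tmul, tmul_sub]
  abel

theorem tmul_mem_currentLie {g : Submodule K A} (f : F) {a : A} (ha : a ∈ g) :
    f ⊗ₜ[K] a ∈ currentLie K (F := F) g :=
  mem_sInf.2 fun _ hL => hL.1 (tmul_mem_tSpan mem_top ha)

theorem commutator_mem_currentLie {g : Submodule K A} {x y : F ⊗[K] A}
    (hx : x ∈ currentLie K g) (hy : y ∈ currentLie K g) : x * y - y * x ∈ currentLie K g :=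
  mem_sInf.2 fun L hL => hL.2 x (mem_sInf.1 hx L hL) y (mem_sInf.1 hy L hL)

theorem tSpan_commutators_sq_le_currentLie {g : Submodule K A} (hg : bSpan K g g ≤ g) :
    tSpan K (bSpan K ⊤ ⊤) (pSpan K g g) ≤ currentLie K (F := F) g := by
  rw [bSpan, pSpan, tSpan_span_span_le_iff]
  rintro _ ⟨f, -, f', -, rfl⟩ _ ⟨a, ha, b, hb, rfl⟩
  rw [eq_sub_of_add_eq (tmul_commutator f f' a b).symm]
  exact sub_mem
    (commutator_mem_currentLie (tmul_mem_currentLie f ha) (tmul_mem_currentLie f' hb))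
    (tmul_mem_currentLie _ (hg (commutator_mem_bSpan ha hb)))

theorem tSpan_commutatorIdeal_le_currentLie {g : Submodule K A}
    (hg : tSpan K (bSpan K ⊤ ⊤) ⊤ ≤ currentLie K (F := F) g) :
    tSpan K (commutatorIdeal K F) (bSpan K g ⊤) ≤ currentLie K (F := F) g := by
  rw [commutatorIdeal, tSpan_sup_left]
  refine sup_le ?_ ((tSpan_mono le_rfl le_top).trans hg)
  rw [pSpan, bSpan.eq_def K g, tSpan_span_span_le_iff]
  rintro _ ⟨f, -, c, hc, rfl⟩ _ ⟨a, ha, x, -, rfl⟩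
  rw [eq_sub_of_add_eq' (tmul_commutator' f c a x).symm]
  exact sub_mem
    (commutator_mem_currentLie (tmul_mem_currentLie f ha) (hg (tmul_mem_tSpan hc mem_top)))
    (hg (tmul_mem_tSpan (commutator_mem_bSpan mem_top mem_top) mem_top))

theorem typeTwoCurrent_le_currentLie {g : Submodule K A} (hlie : bSpan K g g ≤ g)
    (htop : g ⊔ pSpan K g g = ⊤) : typeTwoCurrent K F g ≤ currentLie K g := by
  have hgen : tSpan K ⊤ g ≤ currentLie K (F := F) g :=
    le_sInf fun _ hL => hL.1
  have hcomm : tSpan K (bSpan K ⊤ ⊤) ⊤ ≤ currentLie K (F := F) g := by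
    rw [← htop, tSpan_sup_right]
    exact sup_le ((tSpan_mono le_top le_rfl).trans hgen) (tSpan_commutators_sq_le_currentLie hlie)
  refine sup_le (sup_le hgen hcomm) ?_
  rw [← bSpan_top_right_eq_of_sup_sq_eq_top htop]
  exact tSpan_commutatorIdeal_le_currentLie hcomm

theorem bSpan_le_typeTwoCurrent {g : Submodule K A} (hlie : bSpan K g g ≤ g) :
    bSpan K (tSpan K ⊤ g ⊔ tSpan K (commutatorIdeal K F) ⊤)
      (tSpan K ⊤ g ⊔ tSpan K (commutatorIdeal K F) ⊤) ≤ typeTwoCurrent K F g := by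
  have hF (f f' : F) : f * f' - f' * f ∈ bSpan K (⊤ : Submodule K F) ⊤ :=
    commutator_mem_bSpan mem_top mem_top
  have hA (a b : A) : a * b - b * a ∈ bSpan K (⊤ : Submodule K A) ⊤ :=
    commutator_mem_bSpan mem_top mem_top
  rw [tSpan, tSpan, ← span_union, bSpan_span_span_le_iff]
  rintro _ (⟨f, -, a, ha, rfl⟩ | ⟨f, hf, a, -, rfl⟩) _ (⟨f', -, b, hb, rfl⟩ | ⟨f', hf', b, -, rfl⟩)
  · rw [tmul_commutator]
    exact add_tmul_mem_typeTwoCurrent (hF f f') (.inl (hlie (commutator_mem_bSpan ha hb)))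
  · rw [tmul_commutator']
    exact add_tmul_mem_typeTwoCurrent (hF f f') (.inr ⟨mul_mem_commutatorIdeal f hf', hA a b⟩)
  all_goals
    rw [tmul_commutator]
    exact add_tmul_mem_typeTwoCurrent (hF f f') (.inr ⟨mul_mem_commutatorIdeal f' hf, hA a b⟩)

theorem currentLie_le_typeTwoCurrent {g : Submodule K A} (hlie : bSpan K g g ≤ g) :
    currentLie K g ≤ typeTwoCurrent K F g := by
  have hle : typeTwoCurrent K F g ≤ tSpan K ⊤ g ⊔ tSpan K (commutatorIdeal K F) ⊤ :=
    sup_le (sup_le_sup le_rfl (tSpan_mono bSpan_top_le_commutatorIdeal le_rfl))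
      (le_sup_of_le_right (tSpan_mono le_rfl le_top))
  exact sInf_le ⟨le_sup_left.trans le_sup_left, fun x hx y hy =>
    bSpan_le_typeTwoCurrent hlie (commutator_mem_bSpan (hle hx) (hle hy))⟩

theorem currentLie_eq_typeTwoCurrent {g : Submodule K A} (hlie : bSpan K g g ≤ g)
    (htop : g ⊔ pSpan K g g = ⊤) : currentLie K g = typeTwoCurrent K F g :=
  (currentLie_le_typeTwoCurrent hlie).antisymm (typeTwoCurrent_le_currentLie hlie htop)

end CurrentLie

section RankOne

variable {K} {V : Type*} [AddCommGroup V] [Module K V]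

theorem eq_top_of_forall_smulRight_mem [FiniteDimensional K V]
    {P : Submodule K (Module.End K V)}
    (hP : ∀ (φ : Module.Dual K V) (u : V), φ.smulRight u ∈ P) : P = ⊤ := by
  refine eq_top_iff'.2 fun M => ?_
  let b := Module.finBasis K V
  have hM : M = ∑ i, (b.coord i).smulRight (M (b i)) := b.ext fun j => by
    simp [Finsupp.single_apply, ite_smul]
  rw [hM]
  exact sum_mem fun i _ => hP _ _

theorem smulRight_mul_smulRight (φ ψ : Module.Dual K V) (u v : V) :
    (φ.smulRight u * ψ.smulRight v : Module.End K V) = φ v • ψ.smulRight u := by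
  ext x
  simp [smul_smul, mul_comm]

theorem smul_sub_trace_smul_mem_bSpan_top [FiniteDimensional K V] (ψ : Module.Dual K V) (w : V)
    (M : Module.End K V) :
    ψ w • M - LinearMap.trace K V M • ψ.smulRight w ∈ bSpan K (⊤ : Submodule K _) ⊤ := by
  let T : Module.End K V →ₗ[K] Module.End K V :=
    ψ w • LinearMap.id - (LinearMap.trace K V).smulRight (ψ.smulRight w)
  suffices h : (bSpan K ⊤ ⊤).comap T = ⊤ from h.ge mem_top
  refine eq_top_of_forall_smulRight_mem fun φ u => ?_
  have hcomm : T (φ.smulRight u) =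
      ψ.smulRight u * φ.smulRight w - φ.smulRight w * ψ.smulRight u := by
    simp only [T, LinearMap.sub_apply, LinearMap.smul_apply, LinearMap.id_apply,
      LinearMap.smulRight_apply, LinearMap.trace_smulRight, smulRight_mul_smulRight]
  rw [mem_comap, hcomm]
  exact commutator_mem_bSpan mem_top mem_top

theorem ker_trace_eq_bSpan_top [FiniteDimensional K V] :
    LinearMap.ker (LinearMap.trace K V) = bSpan K (⊤ : Submodule K (Module.End K V)) ⊤ := by
  refine le_antisymm (fun M hM => ?_) (span_le.2 ?_)
  · rcases subsingleton_or_nontrivial V with _ | _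
    · rw [Subsingleton.elim M 0]
      exact zero_mem _
    obtain ⟨w, hw⟩ := exists_ne (0 : V)
    obtain ⟨ψ, hψ⟩ := Module.Projective.exists_dual_ne_zero K hw
    have hmem := smul_sub_trace_smul_mem_bSpan_top ψ w M
    rwa [LinearMap.mem_ker.1 hM, zero_smul, sub_zero, smul_mem_iff _ hψ] at hmem
  · rintro _ ⟨a, -, b, -, rfl⟩
    rw [SetLike.mem_coe, LinearMap.mem_ker, map_sub, LinearMap.trace_mul_comm, sub_self]

theorem span_one_sup_ker_trace_eq_top [FiniteDimensional K V]
    (hdim : (Module.finrank K V : K) ≠ 0) :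
    span K {(1 : Module.End K V)} ⊔ LinearMap.ker (LinearMap.trace K V) = ⊤ :=
  LinearMap.span_singleton_sup_ker_eq_top _ (by rwa [LinearMap.trace_one])

end RankOne

section SkewAdjoint

variable {K} {V : Type*} [AddCommGroup V] [Module K V] (Φ : LinearMap.BilinForm K V)

/-- The rank-one operators `E(u, v) x = Φ(v, x) u`, as a bilinear map in `u` and `v`. -/
def rankOne : V →ₗ[K] V →ₗ[K] Module.End K V :=
  (LinearMap.smulRightₗ ∘ₗ Φ).flip

/-- The operator `u ∧ v = E(u, v) - ε E(v, u)`, which is skew-adjoint when `Φ` is symmetric and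
`ε = 1` or skew-symmetric and `ε = -1`. -/
def wedge (ε : K) (u v : V) : Module.End K V :=
  rankOne Φ u v - ε • rankOne Φ v u

variable {Φ}

theorem rankOne_apply (u v : V) : rankOne Φ u v = (Φ v).smulRight u := rfl

theorem mem_skewAdjointSubmodule_iff_forall_add_eq_zero {M : Module.End K V} :
    M ∈ Φ.skewAdjointSubmodule ↔ ∀ u v, Φ (M u) v + Φ u (M v) = 0 := by
  simp only [LinearMap.mem_skewAdjointSubmodule, LinearMap.IsSkewAdjoint,
    LinearMap.IsAdjointPair, Pi.neg_apply, map_neg, eq_neg_iff_add_eq_zero]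

theorem bSpan_skewAdjointSubmodule_le :
    bSpan K Φ.skewAdjointSubmodule Φ.skewAdjointSubmodule ≤ Φ.skewAdjointSubmodule := by
  refine span_le.2 ?_
  rintro _ ⟨M, hM, N, hN, rfl⟩
  exact Φ.isSkewAdjoint_bracket hM hN

theorem eq_top_of_forall_rankOne_basis_mem [FiniteDimensional K V] {ι κ : Type*}
    (hnd : Φ.Nondegenerate) (e : Module.Basis ι K V) (d : Module.Basis κ K V)
    {P : Submodule K (Module.End K V)} (hP : ∀ i j, rankOne Φ (e i) (d j) ∈ P) : P = ⊤ := by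
  have hzero : (rankOne Φ).compr₂ P.mkQ = 0 :=
    LinearMap.ext_basis e d fun i j => (Quotient.mk_eq_zero P).2 (hP i j)
  refine eq_top_of_forall_smulRight_mem fun φ u => ?_
  obtain ⟨v, rfl⟩ := (Φ.toDual hnd).surjective φ
  exact (Quotient.mk_eq_zero P).1 (LinearMap.congr_fun₂ hzero u v)

theorem wedge_mem_skewAdjointSubmodule {ε : K} (hε : ε * ε = 1) (hΦ : ∀ u v, Φ u v = ε * Φ v u)
    (u v : V) : wedge Φ ε u v ∈ Φ.skewAdjointSubmodule := by
  refine mem_skewAdjointSubmodule_iff_forall_add_eq_zero.2 fun x y => ?_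
  simp only [wedge, rankOne_apply, LinearMap.sub_apply, LinearMap.smul_apply,
    LinearMap.smulRight_apply, map_sub, map_smul, smul_eq_mul]
  rw [hΦ x u, hΦ x v]
  linear_combination (-Φ v x * Φ u y) * hε

theorem wedge_mul_wedge (ε : K) (u v w z : V) :
    wedge Φ ε u v * wedge Φ ε w z =
      Φ v w • rankOne Φ u z - (ε * Φ v z) • rankOne Φ u w - (ε * Φ u w) • rankOne Φ v z +
        (ε * ε * Φ u z) • rankOne Φ v w := by
  simp only [wedge, rankOne_apply, sub_mul, mul_sub, smul_mul_assoc, mul_smul_comm,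
    smulRight_mul_smulRight]
  module

theorem wedge_mul_wedge_mem_pSpan {ε : K} (hε : ε * ε = 1) (hΦ : ∀ u v, Φ u v = ε * Φ v u)
    (u v w z : V) :
    Φ v w • rankOne Φ u z - (ε * Φ v z) • rankOne Φ u w - (ε * Φ u w) • rankOne Φ v z +
        Φ u z • rankOne Φ v w ∈ pSpan K Φ.skewAdjointSubmodule Φ.skewAdjointSubmodule := by
  have hmem := mul_mem_pSpan (wedge_mem_skewAdjointSubmodule hε hΦ u v)
    (wedge_mem_skewAdjointSubmodule hε hΦ w z)
  rwa [wedge_mul_wedge, hε, one_mul] at hmem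

variable [FiniteDimensional K V]

theorem pSpan_skewAdjointSubmodule_eq_top_of_symm (h2 : (2 : K) ≠ 0) (hnd : Φ.Nondegenerate)
    (hsymm : ∀ u v, Φ u v = Φ v u) (hdim : 3 ≤ Module.finrank K V) :
    pSpan K Φ.skewAdjointSubmodule Φ.skewAdjointSubmodule = ⊤ := by
  let d := Module.finBasis K V
  let e := Φ.dualBasis hnd d
  have hdual (i j) : Φ (e i) (d j) = if j = i then 1 else 0 := Φ.apply_dualBasis_left hnd d i j
  have hthird (i j : Fin (Module.finrank K V)) : ∃ k, k ≠ i ∧ k ≠ j := by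
    have hcard : Finset.card {i, j} < (Finset.univ : Finset (Fin (Module.finrank K V))).card :=
      Finset.card_le_two.trans_lt (by rwa [Finset.card_fin])
    simpa using Finset.exists_mem_notMem_of_card_lt_card hcard
  have hmem {i j k} (hki : k ≠ i) (hkj : k ≠ j) : rankOne Φ (e i) (d j) +
      (if j = i then (1 : K) else 0) • rankOne Φ (e k) (d k) ∈
        pSpan K Φ.skewAdjointSubmodule Φ.skewAdjointSubmodule := by
    simpa [hdual, hki, hkj.symm] using
      wedge_mul_wedge_mem_pSpan (Φ := Φ) (mul_one 1) (by simpa using hsymm) (e i) (e k) (d k) (d j)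
  have hdiag {i k} (hki : k ≠ i) : rankOne Φ (e i) (d i) + rankOne Φ (e k) (d k) ∈
      pSpan K Φ.skewAdjointSubmodule Φ.skewAdjointSubmodule := by
    simpa using hmem hki hki
  refine eq_top_of_forall_rankOne_basis_mem hnd e d fun i j => ?_
  obtain ⟨k, hki, hkj⟩ := hthird i j
  rcases eq_or_ne j i with rfl | hji
  · obtain ⟨l, hlj, hlk⟩ := hthird j k
    rw [← smul_mem_iff _ h2]
    convert sub_mem (add_mem (hdiag hki) (hdiag hlj)) (hdiag hlk) using 1
    module
  · simpa [hji] using hmem hki hkj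

theorem pSpan_skewAdjointSubmodule_eq_top_of_skew (h2 : (2 : K) ≠ 0) (hnd : Φ.Nondegenerate)
    (hskew : ∀ u v, Φ u v = -Φ v u) :
    pSpan K Φ.skewAdjointSubmodule Φ.skewAdjointSubmodule = ⊤ := by
  let d := Module.finBasis K V
  let e := Φ.dualBasis hnd d
  have hdual (i j) : Φ (e i) (d j) = if j = i then 1 else 0 := Φ.apply_dualBasis_left hnd d i j
  refine eq_top_of_forall_rankOne_basis_mem hnd e d fun i j => ?_
  have hmem := wedge_mul_wedge_mem_pSpan (Φ := Φ) (ε := -1) (by simp) (by simpa using hskew)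
    (e i) (e j) (d j) (d j)
  simp only [hdual, if_true, mul_one, one_smul] at hmem
  rcases eq_or_ne j i with rfl | hji
  · rw [← smul_mem_iff _ (mul_ne_zero h2 h2)]
    convert hmem using 1
    simp only [if_true]
    module
  · rw [← smul_mem_iff _ h2]
    convert hmem using 1
    simp only [hji, if_false]
    module

theorem pSpan_skewAdjointSubmodule_eq_top (h2 : (2 : K) ≠ 0) (hnd : Φ.SeparatingLeft)
    (hΦ : ((∀ u v, Φ u v = Φ v u) ∧ 3 ≤ Module.finrank K V) ∨ ∀ u v, Φ u v = -Φ v u) :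
    pSpan K Φ.skewAdjointSubmodule Φ.skewAdjointSubmodule = ⊤ := by
  have hrefl : Φ.IsRefl := fun u v huv => by
    rcases hΦ with ⟨hsymm, -⟩ | hskew
    · rw [hsymm, huv]
    · rw [hskew, huv, neg_zero]
  have hnd' : Φ.Nondegenerate := hrefl.nondegenerate_iff_separatingLeft.2 hnd
  rcases hΦ with ⟨hsymm, hdim⟩ | hskew
  · exact pSpan_skewAdjointSubmodule_eq_top_of_symm h2 hnd' hsymm hdim
  · exact pSpan_skewAdjointSubmodule_eq_top_of_skew h2 hnd' hskew

end SkewAdjoint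

theorem statement8_general {K : Type*} [Field K]
    {F : Type*} [NonUnitalRing F] [Module K F] [SMulCommClass K F F] [IsScalarTower K F F]
    {V : Type*} [AddCommGroup V] [Module K V] [FiniteDimensional K V]
    (h2 : (2 : K) ≠ 0) (hdim : (Module.finrank K V : K) ≠ 0)
    (Φ : V →ₗ[K] V →ₗ[K] K) (hnd : Φ.SeparatingLeft)
    (hΦ : ((∀ u v, Φ u v = Φ v u) ∧ 3 ≤ Module.finrank K V) ∨ ∀ u v, Φ u v = -Φ v u) :
    pSpan K Φ.skewAdjointSubmodule Φ.skewAdjointSubmodule = ⊤ ∧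
    currentLie K (F := F) Φ.skewAdjointSubmodule =
      tSpan K ⊤ Φ.skewAdjointSubmodule ⊔
        tSpan K (bSpan K ⊤ ⊤) (span K {1}) ⊔
        tSpan K (commutatorIdeal K F) (LinearMap.ker (LinearMap.trace K V)) := by
  have hsq := pSpan_skewAdjointSubmodule_eq_top h2 hnd hΦ
  have hone := span_one_sup_ker_trace_eq_top hdim
  rw [ker_trace_eq_bSpan_top] at hone ⊢
  refine ⟨hsq, ?_⟩
  rw [currentLie_eq_typeTwoCurrent (g := Φ.skewAdjointSubmodule) bSpan_skewAdjointSubmodule_le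
    (by rw [hsq, sup_top_eq]), typeTwoCurrent_eq_of_span_one_sup_eq_top _ hone]

/-- for a nondegenerate symmetric (dim ≥ 3) or skew-symmetric
(dim = 2m ≥ 2) bilinear form `Φ`, one has `o(Φ) + o(Φ)² = End(V)` and
`(o(Φ), End(V))(F) = F ⊗ o(Φ) + [F,F] ⊗ 1 + (F·[F,F] + [F,F]) ⊗ sl(V)`. -/
theorem statement8 {K : Type*} [Field K] [CharZero K]
    {F : Type*} [NonUnitalRing F] [Module K F] [SMulCommClass K F F] [IsScalarTower K F F]
    {V : Type*} [AddCommGroup V] [Module K V] [FiniteDimensional K V]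
    (Φ : V →ₗ[K] V →ₗ[K] K) (hΦnd : ∀ x : V, (∀ y : V, Φ x y = 0) → x = 0)
    (hΦ : ((∀ u v : V, Φ u v = Φ v u) ∧ 3 ≤ Module.finrank K V) ∨
          ((∀ u v : V, Φ u v = - Φ v u) ∧ ∃ m : ℕ, 1 ≤ m ∧ Module.finrank K V = 2 * m))
    (g : Submodule K (Module.End K V))
    (hg : ∀ M : Module.End K V, M ∈ g ↔ ∀ u v : V, Φ (M u) v + Φ u (M v) = 0) :
    g ⊔ pSpan K g g = (⊤ : Submodule K (Module.End K V)) ∧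
    currentLie K (F := F) g =
      tSpan K (⊤ : Submodule K F) g ⊔
        tSpan K (bSpan K (⊤ : Submodule K F) ⊤)
          (Submodule.span K {(1 : Module.End K V)}) ⊔
        tSpan K (pSpan K (⊤ : Submodule K F) (bSpan K ⊤ ⊤) ⊔ bSpan K (⊤ : Submodule K F) ⊤)
          (LinearMap.ker (LinearMap.trace K V)) := by
  obtain rfl : g = Φ.skewAdjointSubmodule := Submodule.ext fun M =>
    (hg M).trans mem_skewAdjointSubmodule_iff_forall_add_eq_zero.symm
  have hdim : Module.finrank K V ≠ 0 := by omega
  obtain ⟨hsq, hcurrent⟩ := statement8_general (F := F) two_ne_zero (Nat.cast_ne_zero.2 hdim) Φ hΦnd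
    (hΦ.imp_right And.left)
  exact ⟨by rw [hsq, sup_top_eq], hcurrent⟩
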